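/- Let B ⊆ A be an inclusion of simple unital C*-algebras with common unit admitting a finite-index conditional expectation, and let C := C*(B ∪ C_A(B)). Then the inclusion B ⊂ A is regular if and only if there exist a finite group G and a map u : G → U(A) with u_e = 1 such that: (i) u_g B u_g* = B and u_g C u_g* = C for all g ∈ G; (ii) σ(g,h) := u_g u_h u_{gh}* lies in U(B)·U(C_A(B)) ⊆ U(C) for all g, h ∈ G; (iii) for every g ≠ e the automorphism Ad(u_g)|_B of B is outer; and (iv) every x ∈ A can be written uniquely as x = Σ_{g ∈ G} u_g c_g with c_g ∈ C. (Conditions (i)–(iv) say that (α, σ) with α_g = Ad(u_g)|_C is a cocycle action of G on C leaving B outerly invariant and that (B ⊂ A) ≅ (B ⊂ C ⋊^r_{(α,σ)} G).) -/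

import Mathlib

/-!
Let `N` be the group of unitaries normalizing `B`, `H = U(B)·U(C_A(B))` its normal subgroup and
`C = C*(B ∪ C_A(B))`. A C⋆-algebra is spanned by its unitaries, so `C` is the closed span of `H`,
and `B` is regular iff `A` is the closed span of `N`. Hence an expansion `A = ∑ u_g C` with
`u_g ∈ N` makes `B` regular. Conversely, choose representatives `u_g` of `G = N/H`.

* `E` vanishes on `N \ H`: for `w ∈ N` the element `x = w* E(w)` centralizes `B`. If `x ≠ 0`, then
  simplicity of `B` makes `w x ∈ B` a multiple of a unitary `v`, and `w = v (v* w)` lies in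
  `U(B)·U(C_A(B))`.
* The sum `∑ u_g C` is dense in `A`. Perturbing the elements `λ_i*` of the quasi-basis into it keeps
  `x ↦ ∑ E(x λ_i) λ_i*` invertible, so the sum is all of `A`. In particular it contains the `λ_i*`,
  so already finitely many cosets suffice.
* If `g ≠ h`, then `E(u_g* · )` kills `u_h C`. Hence no coset can be omitted, so `G` is finite, and
  the coefficients of an expansion are unique because the quasi-basis makes `E` faithful.
-/

namespace RegularInclusion

variable {A : Type*} [NormedRing A] [StarRing A] [CStarRing A] [CompleteSpace A]
  [NormedAlgebra ℂ A] [StarModule ℂ A]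

/-- A conditional expectation of `A` onto the subset `B`: a `ℂ`-linear positive
`B`-bimodular projection of `A` onto `B`. -/
def IsCondExp (B : Set A) (E : A →ₗ[ℂ] A) : Prop :=
  (∀ x, E x ∈ B) ∧ (∀ b ∈ B, E b = b) ∧
  (∀ x, ∃ y, E (star x * x) = star y * y) ∧
  (∀ b₁ ∈ B, ∀ b₂ ∈ B, ∀ x, E (b₁ * x * b₂) = b₁ * E x * b₂)

/-- `l` is a right quasi-basis for `E`, witnessing finite index. -/
def IsRightQB (E : A →ₗ[ℂ] A) {n : ℕ} (l : Fin n → A) : Prop :=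
  ∀ x, x = ∑ i, E (x * l i) * star (l i)

/-- The centralizer (relative commutant) `C_A(B)` of `B` in `A`. -/
def cent (B : Set A) : Set A := {x | ∀ b ∈ B, x * b = b * x}

/-- The normalizer `N_A(B) = {u ∈ U(A) : uBu* = B}` of `B` in `A`. -/
def normalizer (B : Set A) : Set A :=
  {u | u ∈ unitary A ∧ (fun x => u * x * star u) '' B = B}

/-- The set `U(B)` of unitaries of `B`. -/
def UB (B : Set A) : Set A := {b | b ∈ B ∧ b ∈ unitary A}

/-- The set `U(B)·U(C_A(B))` of products of a unitary of `B` and a unitary of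
the centralizer of `B`. -/
def UBC (B : Set A) : Set A :=
  {x | ∃ b c, b ∈ B ∧ b ∈ unitary A ∧ c ∈ cent B ∧ c ∈ unitary A ∧ x = b * c}

/-- Simplicity of the C*-algebra (given as the subset `S` of `A`): the only closed
two-sided ideals of `S` are `{0}` and `S`. -/
def IsSimpleCStar (S : Set A) : Prop :=
  ∀ I : Set A, I ⊆ S → IsClosed I → (0 : A) ∈ I →
    (∀ x ∈ I, ∀ y ∈ I, x + y ∈ I) →
    (∀ x ∈ I, ∀ b ∈ S, x * b ∈ I ∧ b * x ∈ I) →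
    I = {0} ∨ I = S

/-- The intermediate C*-subalgebra `C := C*(B ∪ C_A(B))` generated by `B` and the
centralizer of `B`. -/
def genC (B : Set A) : StarSubalgebra ℂ A :=
  (StarAlgebra.adjoin ℂ (B ∪ cent B)).topologicalClosure

/-- Regularity of the inclusion `B ⊆ A`: the normalizer of `B` generates `A` as a
C*-algebra. -/
def IsRegular (B : Set A) : Prop :=
  (StarAlgebra.adjoin ℂ (normalizer B)).topologicalClosure = ⊤

/-- `E₀` is the minimal conditional expectation of `A` onto `B`: the finite-index
conditional expectation whose (scalar) Watatani index is least among all finite-index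
conditional expectations onto `B`. -/
def IsMinimalCondExp (B : Set A) (E₀ : A →ₗ[ℂ] A) : Prop :=
  IsCondExp B E₀ ∧
  ∃ (r₀ : ℝ) (n : ℕ) (l : Fin n → A), IsRightQB E₀ l ∧
    (∑ i, l i * star (l i)) = (r₀ : ℂ) • 1 ∧
    ∀ E : A →ₗ[ℂ] A, IsCondExp B E → ∀ (m : ℕ) (μ : Fin m → A), IsRightQB E μ →
      ∀ r : ℝ, (∑ i, μ i * star (μ i)) = (r : ℂ) • 1 → r₀ ≤ r

/-- A bundled finite group. -/
structure FiniteGroupData : Type 1 where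
  G : Type
  [grp : Group G]
  [fin : Fintype G]

attribute [instance] FiniteGroupData.grp FiniteGroupData.fin

section QuasiBasis

lemma mul_mem_iSup {𝕜 R : Type*} {ι : Sort*} [CommSemiring 𝕜] [Semiring R] [Algebra 𝕜 R] {a : R}
    {V : ι → Submodule 𝕜 R} (h : ∀ j, ∀ v ∈ V j, a * v ∈ V j) {v : R} (hv : v ∈ ⨆ j, V j) :
    a * v ∈ ⨆ j, V j := by
  have hle : ⨆ j, V j ≤ (⨆ j, V j).comap (LinearMap.mulLeft 𝕜 a) :=
    iSup_le fun j v hv ↦ Submodule.mem_iSup_of_mem j (h j v hv)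
  exact hle hv

/-- The maps `x ↦ ∑ E (x l_i) m_i` with `m_i ∈ V` have range in `V`. The quasi-basis makes one of
them invertible, because the identity is the one with `m = r` and the units are open. -/
lemma eq_top_of_dense_of_quasiBasis {𝕜 R κ : Type*} [NontriviallyNormedField 𝕜] [NormedRing R]
    [NormedAlgebra 𝕜 R] [CompleteSpace R] [Fintype κ] {E : R →L[𝕜] R} {l r : κ → R}
    (h : ∀ x, x = ∑ i, E (x * l i) * r i) {V : Submodule 𝕜 R}
    (hV : ∀ x, ∀ v ∈ V, E x * v ∈ V) (hdense : Dense (V : Set R)) : V = ⊤ := by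
  let T (m : κ → R) : R →L[𝕜] R :=
    ∑ i, (ContinuousLinearMap.mul 𝕜 R).flip (m i) ∘L E ∘L (ContinuousLinearMap.mul 𝕜 R).flip (l i)
  have hT : ∀ m x, T m x = ∑ i, E (x * l i) * m i := fun m x ↦ by simp [T]
  have hT_cont : Continuous T := by fun_prop
  have hTr : T r = 1 := by ext x; rw [hT, ← h]; rfl
  obtain ⟨m, hm, hmV⟩ : ∃ m, IsUnit (T m) ∧ ∀ i, m i ∈ V := by
    obtain ⟨m, hmV, hm⟩ := (dense_pi Set.univ fun _ _ ↦ hdense).exists_mem_open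
      (Units.isOpen.preimage hT_cont) ⟨r, by simp [hTr]⟩
    exact ⟨m, hm, fun i ↦ hmV i trivial⟩
  obtain ⟨S, hS, -⟩ := isUnit_iff_exists.1 hm
  refine Submodule.eq_top_iff'.2 fun x ↦ ?_
  have hx : T m (S x) = x := DFunLike.congr_fun hS x
  rw [← hx, hT]
  exact sum_mem fun i _ ↦ hV _ _ (hmV i)

lemma exists_finset_iSup_eq_top_of_quasiBasis {𝕜 R ι κ : Type*} [CommSemiring 𝕜] [Semiring R]
    [Algebra 𝕜 R] [Fintype κ] {E : R → R} {l r : κ → R}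
    (h : ∀ x, x = ∑ i, E (x * l i) * r i) {V : ι → Submodule 𝕜 R}
    (hV : ∀ j x, ∀ v ∈ V j, E x * v ∈ V j) (htop : ⨆ j, V j = ⊤) :
    ∃ F : Finset ι, ⨆ j ∈ F, V j = ⊤ := by
  classical
  have hr : ∀ i, ∃ F : Finset ι, r i ∈ ⨆ j ∈ F, V j := fun i ↦
    Submodule.mem_iSup_iff_exists_finset.1 (htop ▸ Submodule.mem_top)
  choose F hF using hr
  refine ⟨Finset.univ.biUnion F, Submodule.eq_top_iff'.2 fun x ↦ ?_⟩
  rw [h x]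
  refine sum_mem fun i _ ↦ mul_mem_iSup (fun j v hv ↦ mul_mem_iSup (fun _ w hw ↦ hV j _ w hw) hv) ?_
  have hle : ⨆ j ∈ F i, V j ≤ ⨆ j ∈ Finset.univ.biUnion F, V j :=
    biSup_mono fun j hj ↦ Finset.mem_biUnion.2 ⟨i, Finset.mem_univ i, hj⟩
  exact hle (hF i)

end QuasiBasis

section UnitaryRepresentation

variable {Γ R : Type*} [Group Γ] [TopologicalSpace R] [Ring R] [IsTopologicalRing R]
  [StarRing R] [ContinuousStar R] [Algebra ℂ R] [StarModule ℂ R] {π : Γ →* unitary R}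
  {H : Subgroup Γ}

/-- The closed star subalgebra `C*(π(H))` of `R` generated by the unitaries `π h`, `h ∈ H`. -/
def cstarSpan (π : Γ →* unitary R) (H : Subgroup Γ) : StarSubalgebra ℂ R :=
  (StarAlgebra.adjoin ℂ ((fun n ↦ (π n : R)) '' H)).topologicalClosure

lemma coe_mem_cstarSpan {h : Γ} (hh : h ∈ H) : (π h : R) ∈ cstarSpan π H :=
  StarSubalgebra.le_topologicalClosure _ (StarAlgebra.subset_adjoin ℂ _ ⟨h, hh, rfl⟩)

lemma cstarSpan_mono {K : Subgroup Γ} (h : H ≤ K) : cstarSpan π H ≤ cstarSpan π K :=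
  StarSubalgebra.topologicalClosure_mono (StarAlgebra.adjoin_mono (Set.image_mono h))

lemma coe_cstarSpan :
    (cstarSpan π H : Set R) = closure (Submodule.span ℂ ((fun n ↦ (π n : R)) '' H)) := by
  have hstar : star ((fun n ↦ (π n : R)) '' H) ⊆ (fun n ↦ (π n : R)) '' H := by
    rintro x ⟨h, hh, hx⟩
    exact ⟨h⁻¹, inv_mem hh, by simpa [← Unitary.star_eq_inv] using congrArg star hx⟩
  have hclosure : (Submonoid.closure ((fun n ↦ (π n : R)) '' H) : Set R)
      = (fun n ↦ (π n : R)) '' H :=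
    congrArg SetLike.coe
      (H.toSubmonoid.map ((unitary R).subtype.comp π)).closure_eq
  have hspan := StarAlgebra.adjoin_eq_span (R := ℂ) ((fun n ↦ (π n : R)) '' (H : Set Γ))
  rw [Set.union_eq_self_of_subset_right hstar, hclosure] at hspan
  rw [cstarSpan, StarSubalgebra.topologicalClosure_coe, ← hspan]
  rfl

lemma mem_of_mem_cstarSpan {V : Submodule ℂ R} (hV : IsClosed (V : Set R))
    (h : ∀ n ∈ H, (π n : R) ∈ V) {x : R} (hx : x ∈ cstarSpan π H) : x ∈ V := by
  rw [← SetLike.mem_coe, coe_cstarSpan] at hx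
  exact closure_minimal (Submodule.span_le.2 (Set.image_subset_iff.2 h)) hV hx

lemma conj_mem_cstarSpan [H.Normal] (n : Γ) {c : R} (hc : c ∈ cstarSpan π H) :
    (π n : R) * c * star (π n : R) ∈ cstarSpan π H := by
  let V : Submodule ℂ R := (cstarSpan π H).toSubalgebra.toSubmodule.comap
    (Unitary.conjStarAlgAut ℂ R (π n) : R →ₗ[ℂ] R)
  have hV : IsClosed (V : Set R) :=
    (StarSubalgebra.isClosed_topologicalClosure _).preimage
      (by fun_prop : Continuous fun x ↦ (π n : R) * x * star (π n : R))
  refine mem_of_mem_cstarSpan hV (fun h hh ↦ ?_) hc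
  have := coe_mem_cstarSpan (π := π) (Subgroup.Normal.conj_mem ‹H.Normal› h hh n)
  simpa [V, ← Unitary.star_eq_inv] using this

lemma image_conj_cstarSpan [H.Normal] (n : Γ) :
    (fun x ↦ (π n : R) * x * star (π n : R)) '' (cstarSpan π H : Set R) = cstarSpan π H := by
  refine (Set.image_subset_iff.2 fun c hc ↦ conj_mem_cstarSpan n hc).antisymm fun c hc ↦
    ⟨_, conj_mem_cstarSpan n⁻¹ hc, ?_⟩
  have h : Unitary.conjStarAlgAut ℂ R (π n) (Unitary.conjStarAlgAut ℂ R (π n⁻¹) c) = c := by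
    rw [← Unitary.conjStarAlgAut_mul_apply, ← map_mul, mul_inv_cancel, map_one, map_one]
    rfl
  exact h

/-- The left translate `π(n) C*(π(H))`, which depends only on the coset `nH`. -/
def cosetSpan (π : Γ →* unitary R) (H : Subgroup Γ) (n : Γ) : Submodule ℂ R :=
  (cstarSpan π H).toSubalgebra.toSubmodule.map (LinearMap.mulLeft ℂ (π n : R))

lemma mem_cosetSpan {n : Γ} {x : R} :
    x ∈ cosetSpan π H n ↔ ∃ c ∈ cstarSpan π H, π n * c = x :=
  Submodule.mem_map

lemma coe_mem_cosetSpan {m n : Γ} (h : (n : Γ ⧸ H) = m) : (π m : R) ∈ cosetSpan π H n :=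
  mem_cosetSpan.2 ⟨π (n⁻¹ * m), coe_mem_cstarSpan (QuotientGroup.eq.1 h), by
    rw [← Submonoid.coe_mul, ← map_mul, mul_inv_cancel_left]⟩

lemma mul_mem_cosetSpan [H.Normal] {n : Γ} {a x : R} (ha : a ∈ cstarSpan π H)
    (hx : x ∈ cosetSpan π H n) : a * x ∈ cosetSpan π H n := by
  obtain ⟨c, hc, rfl⟩ := mem_cosetSpan.1 hx
  refine mem_cosetSpan.2 ⟨_, mul_mem (conj_mem_cstarSpan n⁻¹ ha) hc, ?_⟩
  simp only [map_inv, ← Unitary.star_eq_inv, Unitary.coe_star, star_star, ← mul_assoc,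
    Unitary.mul_star_self_of_mem (π n).2, one_mul]

lemma cosetSpan_mul_mem {n : Γ} {a x : R} (hx : x ∈ cosetSpan π H n)
    (ha : a ∈ cstarSpan π H) : x * a ∈ cosetSpan π H n := by
  obtain ⟨c, hc, rfl⟩ := mem_cosetSpan.1 hx
  exact mem_cosetSpan.2 ⟨c * a, mul_mem hc ha, (mul_assoc _ _ _).symm⟩

lemma dense_iSup_cosetSpan {ι : Type*} {u : ι → Γ}
    (hu : Function.Surjective fun i ↦ (u i : Γ ⧸ H)) (htop : cstarSpan π ⊤ = ⊤) :
    Dense ((⨆ i, cosetSpan π H (u i) : Submodule ℂ R) : Set R) := by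
  have hspan : Submodule.span ℂ ((fun n ↦ (π n : R)) '' (⊤ : Subgroup Γ))
      ≤ ⨆ i, cosetSpan π H (u i) := by
    rw [Submodule.span_le, Set.image_subset_iff]
    intro n _
    obtain ⟨i, hi⟩ := hu n
    exact Submodule.mem_iSup_of_mem i (coe_mem_cosetSpan hi)
  refine Dense.mono hspan (dense_iff_closure_eq.2 ?_)
  rw [← coe_cstarSpan, htop, StarSubalgebra.coe_top]

section Expectation

variable {M : Type*} [AddCommGroup M] [Module ℂ M] [TopologicalSpace M] [T1Space M]
  {E : R →L[ℂ] M}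

lemma map_mul_coe_eq_zero (hE : ∀ n ∉ H, E (π n) = 0) {n : Γ} (hn : n ∉ H)
    {c : R} (hc : c ∈ cstarSpan π H) : E (c * π n) = 0 := by
  let V : Submodule ℂ R := (E.toLinearMap ∘ₗ LinearMap.mulRight ℂ (π n : R)).ker
  have hV : IsClosed (V : Set R) :=
    isClosed_singleton.preimage (E.continuous.comp (continuous_mul_const _))
  refine mem_of_mem_cstarSpan hV (fun h hh ↦ ?_) hc
  simpa [V] using hE (h * n) (mt (H.mul_mem_cancel_left hh).1 hn)

lemma map_coe_inv_mul_eq_zero (hE : ∀ n ∉ H, E (π n) = 0) {m n : Γ}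
    (hmn : (m : Γ ⧸ H) ≠ n) {x : R} (hx : x ∈ cosetSpan π H n) : E (π m⁻¹ * x) = 0 := by
  obtain ⟨c, hc, rfl⟩ := mem_cosetSpan.1 hx
  let V : Submodule ℂ R := (E.toLinearMap ∘ₗ LinearMap.mulLeft ℂ (π (m⁻¹ * n) : R)).ker
  have hV : IsClosed (V : Set R) :=
    isClosed_singleton.preimage (E.continuous.comp (continuous_const_mul _))
  have hcV : c ∈ V := by
    refine mem_of_mem_cstarSpan hV (fun h hh ↦ ?_) hc
    have hmem : m⁻¹ * n * h ∉ H := fun hmem ↦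
      hmn (QuotientGroup.eq.2 ((H.mul_mem_cancel_right hh).1 hmem))
    simpa [V, mul_assoc] using hE _ hmem
  simpa [V, mul_assoc] using hcV

/-- Applying `E (π(u_j)* · π(n))` to the relation isolates its `j`-th term, so `E (c_j π(n)) = 0`
for `n ∈ H`; for `n ∉ H` this holds for every element of `C*(π(H))`. -/
lemma eq_zero_of_sum_mul_eq_zero (hE : ∀ n ∉ H, E (π n) = 0)
    (hfaithful : ∀ x, (∀ a, E (x * a) = 0) → x = 0) (htop : cstarSpan π ⊤ = ⊤)
    {ι : Type*} {u : ι → Γ} (hu : Function.Injective fun i ↦ (u i : Γ ⧸ H)) {s : Finset ι}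
    {c : ι → R} (hc : ∀ i ∈ s, c i ∈ cstarSpan π H) (hsum : ∑ i ∈ s, π (u i) * c i = 0)
    {j : ι} (hj : j ∈ s) : c j = 0 := by
  have hunitary : ∀ n, E (c j * π n) = 0 := by
    intro n
    by_cases hn : n ∈ H
    · have hterm : ∀ i ∈ s, i ≠ j → E (π (u j)⁻¹ * (π (u i) * c i * π n)) = 0 := fun i hi hij ↦
        map_coe_inv_mul_eq_zero hE (fun h ↦ hij (hu h).symm)
          (cosetSpan_mul_mem (mem_cosetSpan.2 ⟨c i, hc i hi, rfl⟩) (coe_mem_cstarSpan hn))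
      calc E (c j * π n) = E (π (u j)⁻¹ * (π (u j) * c j * π n)) := by
            simp [← Unitary.star_eq_inv, ← mul_assoc]
        _ = E (π (u j)⁻¹ * ((∑ i ∈ s, π (u i) * c i) * π n)) := by
            rw [Finset.sum_mul, Finset.mul_sum, map_sum, Finset.sum_eq_single_of_mem j hj hterm]
        _ = 0 := by simp [hsum]
    · exact map_mul_coe_eq_zero hE hn (hc j hj)
  refine hfaithful _ fun a ↦ ?_
  let V : Submodule ℂ R := (E.toLinearMap ∘ₗ LinearMap.mulLeft ℂ (c j)).ker
  have hV : IsClosed (V : Set R) :=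
    isClosed_singleton.preimage (E.continuous.comp (continuous_const_mul _))
  exact mem_of_mem_cstarSpan (π := π) (H := ⊤) hV (fun n _ ↦ hunitary n) (htop ▸ trivial)

/-- If `j` were missing from `F`, then `E (π(u_j)* · )` would vanish on all of `R`, in particular
at `π(u_j)`. -/
lemma mem_of_iSup_cosetSpan_eq_top (hE : ∀ n ∉ H, E (π n) = 0) (hE1 : E 1 ≠ 0)
    {ι : Type*} {u : ι → Γ} (hu : Function.Injective fun i ↦ (u i : Γ ⧸ H)) {F : Finset ι}
    (hF : ⨆ i ∈ F, cosetSpan π H (u i) = ⊤) (j : ι) : j ∈ F := by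
  by_contra hj
  let V : Submodule ℂ R := (E.toLinearMap ∘ₗ LinearMap.mulLeft ℂ (π (u j)⁻¹ : R)).ker
  have hV : ⨆ i ∈ F, cosetSpan π H (u i) ≤ V := iSup₂_le fun i hi x hx ↦
    map_coe_inv_mul_eq_zero hE (fun h ↦ hj ((hu h : j = i) ▸ hi)) hx
  have hmem : (π (u j) : R) ∈ V := hV (hF ▸ trivial)
  exact hE1 (by simpa [V, ← Unitary.star_eq_inv] using hmem)

end Expectation
end UnitaryRepresentation

section QuasiBasisDecomposition

variable {Γ G R κ : Type*} [Group Γ] [NormedRing R] [CompleteSpace R] [StarRing R]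
  [ContinuousStar R] [NormedAlgebra ℂ R] [StarModule ℂ R] [Fintype κ] {π : Γ →* unitary R}
  {H : Subgroup Γ} [H.Normal] {E : R →L[ℂ] R} {l r : κ → R} {u : G → Γ}

lemma iSup_cosetSpan_eq_top (hrange : ∀ x, E x ∈ cstarSpan π H)
    (hquasi : ∀ x, x = ∑ i, E (x * l i) * r i) (htop : cstarSpan π ⊤ = ⊤)
    (hu : Function.Surjective fun g ↦ (u g : Γ ⧸ H)) : ⨆ g, cosetSpan π H (u g) = ⊤ :=
  eq_top_of_dense_of_quasiBasis hquasi
    (fun x _ hv ↦ mul_mem_iSup (fun _ _ hw ↦ mul_mem_cosetSpan (hrange x) hw) hv)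
    (dense_iSup_cosetSpan hu htop)

lemma finite_of_quasiBasis (hrange : ∀ x, E x ∈ cstarSpan π H)
    (hquasi : ∀ x, x = ∑ i, E (x * l i) * r i) (hE : ∀ n ∉ H, E (π n) = 0) (hE1 : E 1 ≠ 0)
    (htop : cstarSpan π ⊤ = ⊤) (hu : Function.Bijective fun g ↦ (u g : Γ ⧸ H)) : Finite G := by
  obtain ⟨F, hF⟩ := exists_finset_iSup_eq_top_of_quasiBasis hquasi
    (fun _ x _ hv ↦ mul_mem_cosetSpan (hrange x) hv)
    (iSup_cosetSpan_eq_top hrange hquasi htop hu.surjective)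
  exact Set.finite_univ_iff.1
    (F.finite_toSet.subset fun g _ ↦ mem_of_iSup_cosetSpan_eq_top hE hE1 hu.injective hF g)

lemma existsUnique_coeff [Fintype G] (hrange : ∀ x, E x ∈ cstarSpan π H)
    (hquasi : ∀ x, x = ∑ i, E (x * l i) * r i) (hE : ∀ n ∉ H, E (π n) = 0)
    (htop : cstarSpan π ⊤ = ⊤) (hu : Function.Bijective fun g ↦ (u g : Γ ⧸ H)) (x : R) :
    ∃! c : G → R, (∀ g, c g ∈ cstarSpan π H) ∧ x = ∑ g, π (u g) * c g := by
  have hfaithful : ∀ x, (∀ a, E (x * a) = 0) → x = 0 := fun x hx ↦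
    (hquasi x).trans (by simp [hx])
  have hx : x ∈ ⨆ g ∈ (Finset.univ : Finset G), cosetSpan π H (u g) := by
    simp [iSup_cosetSpan_eq_top hrange hquasi htop hu.surjective]
  obtain ⟨v, hv⟩ := (Submodule.mem_iSup_finset_iff_exists_sum _ _).1 hx
  choose c hc hcv using fun g ↦ mem_cosetSpan.1 (v g).2
  refine ⟨c, ⟨hc, by simp [hcv, hv]⟩, fun c' ⟨hc', hx'⟩ ↦ funext fun g ↦ sub_eq_zero.1 ?_⟩
  have hsum : ∑ g, π (u g) * (c' g - c g) = 0 := by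
    simp only [mul_sub, Finset.sum_sub_distrib, ← hx', hcv, hv, sub_self]
  exact eq_zero_of_sum_mul_eq_zero hE hfaithful htop hu.injective
    (fun g _ ↦ sub_mem (hc' g) (hc g)) hsum (Finset.mem_univ g)

end QuasiBasisDecomposition

section Simple

variable {S R : Type*} [NormedRing R] [CompleteSpace R] [SetLike S R] [SubringClass S R] {B : S}
  {z : R}

/-- The closure of `zB` is a nonzero closed ideal, so `zB` contains elements close to `1`. -/
lemma isUnit_of_central (hBclosed : IsClosed (B : Set R)) (hB : IsSimpleCStar (B : Set R))
    (hz : z ∈ B) (hz0 : z ≠ 0) (hcomm : ∀ b ∈ B, Commute z b) : IsUnit z := by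
  let V : AddSubgroup R := (AddSubgroup.ofClass B).map (AddMonoidHom.mulLeft z)
  have hmem : ∀ x ∈ V.topologicalClosure, ∀ b ∈ B,
      x * b ∈ V.topologicalClosure ∧ b * x ∈ V.topologicalClosure := by
    refine fun x hx b hb ↦ ⟨map_mem_closure (f := (· * b)) (by fun_prop) hx ?_,
      map_mem_closure (f := (b * ·)) (by fun_prop) hx ?_⟩
    · rintro _ ⟨a, ha, rfl⟩
      exact ⟨a * b, mul_mem (S := S) ha hb, (mul_assoc z a b).symm⟩
    · rintro _ ⟨a, ha, rfl⟩
      exact ⟨b * a, mul_mem (S := S) hb ha, (hcomm b hb).left_comm a⟩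
  have hle : (V.topologicalClosure : Set R) ⊆ B := by
    refine closure_minimal ?_ hBclosed
    rintro _ ⟨b, hb, rfl⟩
    exact mul_mem hz hb
  have hzV : z ∈ (V.topologicalClosure : Set R) := subset_closure ⟨1, one_mem B, mul_one z⟩
  have hone : (1 : R) ∈ closure (V : Set R) := by
    rcases hB V.topologicalClosure hle V.isClosed_topologicalClosure (zero_mem _)
      (fun _ hx _ hy ↦ add_mem hx hy) hmem with h | h
    · exact absurd (h.subset hzV) hz0
    · exact h.symm.subset (one_mem B)
  obtain ⟨_, ⟨b, hb, rfl⟩, hunit⟩ :=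
    Filter.Frequently.exists ((mem_closure_iff_frequently.1 hone).and_eventually
      (Units.nhds 1))
  exact ((hcomm b hb).isUnit_mul_iff.1 hunit).1

lemma exists_algebraMap_eq_of_central [NormedAlgebra ℂ R] [SMulMemClass S ℂ R]
    (hBclosed : IsClosed (B : Set R)) (hB : IsSimpleCStar (B : Set R)) (hz : z ∈ B)
    (hcomm : ∀ b ∈ B, Commute z b) : ∃ k : ℂ, algebraMap ℂ R k = z := by
  rcases subsingleton_or_nontrivial R with hR | hR
  · exact ⟨0, Subsingleton.elim _ _⟩
  · obtain ⟨k, hk⟩ := spectrum.nonempty z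
    refine ⟨k, sub_eq_zero.1 (by_contra fun hne ↦ hk ?_)⟩
    exact isUnit_of_central hBclosed hB (sub_mem (algebraMap_mem B k) hz) hne fun b hb ↦
      Commute.sub_left (Algebra.commutes k b) (hcomm b hb)

end Simple

section CStarAlgebra

/-- The standing assumptions on `A`, bundled to give access to the library on C⋆-algebras. -/
abbrev toCStarAlgebra (A : Type*) [NormedRing A] [StarRing A] [CStarRing A] [CompleteSpace A]
    [NormedAlgebra ℂ A] [StarModule ℂ A] : CStarAlgebra A where

lemma le_span_unitary {S : StarSubalgebra ℂ A} (hS : IsClosed (S : Set A)) :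
    S.toSubalgebra.toSubmodule ≤ Submodule.span ℂ {v : A | v ∈ S ∧ v ∈ unitary A} := by
  intro x hx
  let _ := toCStarAlgebra A
  have := hS
  obtain ⟨v, c, hsum, -⟩ := CStarAlgebra.exists_sum_four_unitary (⟨x, hx⟩ : S)
  have hx : x = ∑ i, c i • ((v i : S) : A) := by
    simpa using congrArg (Subtype.val : S → A) hsum
  rw [hx]
  exact sum_mem fun i _ ↦ Submodule.smul_mem _ _ <| Submodule.subset_span
    ⟨(v i : S).2, Unitary.map_mem S.subtype (v i).2⟩

open scoped ComplexOrder in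
lemma star_mul_self_eq_norm_sq {y : A} {k : ℂ} (h : algebraMap ℂ A k = star y * y) :
    star y * y = algebraMap ℂ A (‖y‖ ^ 2 : ℝ) := by
  rcases subsingleton_or_nontrivial A with hA | hA
  · exact Subsingleton.elim _ _
  let _ := toCStarAlgebra A
  let _ := CStarAlgebra.spectralOrder A
  have := CStarAlgebra.spectralOrderedRing A
  have hk : 0 ≤ k := spectrum_nonneg_of_nonneg (star_mul_self_nonneg y)
    (by simp [← h, spectrum.scalar_eq] : k ∈ spectrum ℂ (star y * y))
  have hnorm : ‖k‖ = ‖y‖ ^ 2 := by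
    rw [sq, ← CStarRing.norm_star_mul_self, ← h, norm_algebraMap']
  rw [← h, ← hnorm, ← Complex.eq_coe_norm_of_nonneg hk]

lemma inv_norm_smul_mem_unitary {y : A} (hy : y ≠ 0) {k l : ℂ}
    (hk : algebraMap ℂ A k = star y * y) (hl : algebraMap ℂ A l = y * star y) :
    ((‖y‖⁻¹ : ℝ) : ℂ) • y ∈ unitary A := by
  have hl' := star_mul_self_eq_norm_sq (y := star y) (by rwa [star_star])
  rw [star_star, norm_star] at hl'
  have hy' : (‖y‖ : ℂ) ≠ 0 := by simpa using hy
  have hone : (((‖y‖⁻¹ : ℝ) : ℂ) * (‖y‖⁻¹ : ℝ)) • algebraMap ℂ A (‖y‖ ^ 2 : ℝ) = 1 := by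
    rw [Algebra.algebraMap_eq_smul_one, smul_smul]
    push_cast
    field_simp
    exact one_smul ℂ 1
  have hstar : star ((‖y‖⁻¹ : ℝ) : ℂ) = (‖y‖⁻¹ : ℝ) := Complex.conj_ofReal _
  rw [Unitary.mem_iff, star_smul, hstar, smul_mul_smul_comm, smul_mul_smul_comm,
    star_mul_self_eq_norm_sq hk, hl']
  exact ⟨hone, hone⟩

lemma IsCondExp.continuous {B : Set A} {E : A →ₗ[ℂ] A} (hE : IsCondExp B E) : Continuous E := by
  let _ := toCStarAlgebra A
  let _ := CStarAlgebra.spectralOrder A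
  have := CStarAlgebra.spectralOrderedRing A
  have hpos : ∀ x : A, 0 ≤ x → 0 ≤ E x := by
    intro x hx
    obtain ⟨s, rfl⟩ := CStarAlgebra.nonneg_iff_eq_star_mul_self.1 hx
    obtain ⟨y, hy⟩ := hE.2.2.1 s
    exact hy ▸ star_mul_self_nonneg y
  obtain ⟨K, hK⟩ := PositiveLinearMap.exists_norm_apply_le (PositiveLinearMap.mk₀ E hpos)
  exact (E.mkContinuous K hK).continuous

end CStarAlgebra

section NormalizerSubgroup

variable {R : Type*} [NormedRing R] [StarRing R]

open scoped Pointwise in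
/-- The normalizer `N_R(B)` as a subgroup of `U(R)`: the stabilizer of `B` under conjugation. -/
def normalizerSubgroup (B : Set R) : Subgroup (unitary R) :=
  (MulAction.stabilizer (ConjAct Rˣ) B).comap
    (ConjAct.toConjAct.toMonoidHom.comp Unitary.toUnits)

lemma mem_normalizerSubgroup {B : Set R} {w : unitary R} :
    w ∈ normalizerSubgroup B ↔ (w : R) ∈ normalizer B :=
  ⟨fun h ↦ ⟨w.2, h⟩, And.right⟩

lemma image_coe_normalizerSubgroup (B : Set R) :
    (fun n : normalizerSubgroup B ↦ ((n : unitary R) : R)) '' Set.univ = normalizer B := by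
  ext w
  constructor
  · rintro ⟨n, -, rfl⟩
    exact mem_normalizerSubgroup.1 n.2
  · exact fun hw ↦ ⟨⟨⟨w, hw.1⟩, mem_normalizerSubgroup.2 hw⟩, trivial, rfl⟩

lemma le_normalizerSubgroup {B : Set R} {K : Subgroup (unitary R)}
    (h : ∀ w ∈ K, ∀ b ∈ B, (w : R) * b * star (w : R) ∈ B) : K ≤ normalizerSubgroup B := by
  refine Subgroup.map_le_iff_le_comap.1 ((MulAction.le_stabilizer_iff_smul_le _ _).2 ?_)
  rintro _ ⟨w, hw, rfl⟩ _ ⟨b, hb, rfl⟩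
  exact h w hw b hb

lemma conj_mem_of_mem_normalizer {B : Set R} {w b : R} (hw : w ∈ normalizer B) (hb : b ∈ B) :
    w * b * star w ∈ B :=
  hw.2.subset ⟨b, hb, rfl⟩

lemma conj_mem_cent_of_mem_normalizer {B : Set R} {w c : R} (hw : w ∈ normalizer B)
    (hc : c ∈ cent B) : w * c * star w ∈ cent B := by
  have hww : ∀ z, star w * (w * z) = z := fun z ↦ by
    rw [← mul_assoc, Unitary.star_mul_self_of_mem hw.1, one_mul]
  intro x hx
  obtain ⟨b, hb, rfl⟩ := hw.2.superset hx
  simp only [mul_assoc, hww]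
  rw [← mul_assoc c, hc b hb, mul_assoc]

variable [Algebra ℂ R] [StarModule ℂ R] {B S : StarSubalgebra ℂ R}

/-- The group `U(S)` of unitaries of `R` lying in `S`. -/
def unitariesIn (S : StarSubalgebra ℂ R) : Subgroup (unitary R) where
  __ := S.toSubmonoid.comap (unitary R).subtype
  inv_mem' h := star_mem (S := StarSubalgebra ℂ R) h

lemma coe_centralizer_eq_cent (B : StarSubalgebra ℂ R) :
    (StarSubalgebra.centralizer ℂ (B : Set R) : Set R) = cent (B : Set R) := by
  ext z
  rw [SetLike.mem_coe, StarSubalgebra.mem_centralizer_iff]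
  exact ⟨fun h b hb ↦ (h b hb).1.symm, fun h b hb ↦ ⟨(h b hb).symm, (h _ (star_mem hb)).symm⟩⟩

lemma mem_centralizer {c : R} :
    c ∈ StarSubalgebra.centralizer ℂ (B : Set R) ↔ c ∈ cent (B : Set R) :=
  Set.ext_iff.1 (coe_centralizer_eq_cent B) c

lemma unitariesIn_le_normalizerSubgroup (B : StarSubalgebra ℂ R) :
    unitariesIn B ≤ normalizerSubgroup (B : Set R) :=
  le_normalizerSubgroup fun _ hv _ hb ↦ mul_mem (mul_mem hv hb) (star_mem hv)

lemma unitariesIn_centralizer_le_normalizerSubgroup (B : StarSubalgebra ℂ R) :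
    unitariesIn (StarSubalgebra.centralizer ℂ (B : Set R)) ≤ normalizerSubgroup (B : Set R) :=
  le_normalizerSubgroup fun v hv b hb ↦ by
    rwa [show (v : R) * b = b * v from mem_centralizer.1 hv b hb, mul_assoc,
      Unitary.mul_star_self_of_mem v.2, mul_one]

lemma normal_subgroupOf_unitariesIn {N : Subgroup (unitary R)}
    (h : ∀ w ∈ N, ∀ x ∈ S, (w : R) * x * star (w : R) ∈ S) :
    ((unitariesIn S).subgroupOf N).Normal :=
  ⟨fun _ hv w ↦ h w w.2 _ hv⟩

/-- The inner part `U(B)·U(C_R(B))` of the normalizer of `B`, as a subgroup of it. -/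
def innerSubgroup (B : StarSubalgebra ℂ R) : Subgroup (normalizerSubgroup (B : Set R)) :=
  (unitariesIn B).subgroupOf _ ⊔ (unitariesIn (.centralizer ℂ (B : Set R))).subgroupOf _

instance normal_subgroupOf_centralizer : ((unitariesIn (.centralizer ℂ (B : Set R))).subgroupOf
    (normalizerSubgroup (B : Set R))).Normal :=
  normal_subgroupOf_unitariesIn fun _ hw _ hx ↦
    mem_centralizer.2 <|
      conj_mem_cent_of_mem_normalizer (mem_normalizerSubgroup.1 hw) (mem_centralizer.1 hx)

instance normal_innerSubgroup : (innerSubgroup B).Normal :=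
  have : ((unitariesIn B).subgroupOf (normalizerSubgroup (B : Set R))).Normal :=
    normal_subgroupOf_unitariesIn fun _ hw _ hx ↦
      conj_mem_of_mem_normalizer (mem_normalizerSubgroup.1 hw) hx
  Subgroup.sup_normal _ _

lemma mem_innerSubgroup {n : normalizerSubgroup (B : Set R)} :
    n ∈ innerSubgroup B ↔ ((n : unitary R) : R) ∈ UBC (B : Set R) := by
  rw [innerSubgroup, Subgroup.mem_sup_of_normal_right]
  constructor
  · rintro ⟨b, hb, c, hc, rfl⟩
    exact ⟨_, _, hb, b.1.2, mem_centralizer.1 hc, c.1.2, rfl⟩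
  · rintro ⟨b, c, hb, hbu, hc, hcu, hn⟩
    have hb' : (⟨b, hbu⟩ : unitary R) ∈ unitariesIn B := hb
    have hc' : (⟨c, hcu⟩ : unitary R) ∈ unitariesIn (.centralizer ℂ (B : Set R)) :=
      mem_centralizer.2 hc
    exact ⟨⟨_, unitariesIn_le_normalizerSubgroup B hb'⟩, hb',
      ⟨_, unitariesIn_centralizer_le_normalizerSubgroup B hc'⟩, hc', by ext; exact hn.symm⟩

lemma mem_UBC_of_conj_eq {w v : R} (hw : w ∈ unitary R) (hvB : v ∈ B) (hv : v ∈ unitary R)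
    (h : ∀ x ∈ B, w * x * star w = v * x * star v) : w ∈ UBC (B : Set R) := by
  refine ⟨v, star v * w, hvB, hv, fun x hx ↦ ?_, mul_mem (Unitary.star_mem hv) hw, ?_⟩
  · calc star v * w * x = star v * (w * x * star w) * w := by
          simp only [mul_assoc, Unitary.star_mul_self_of_mem hw, mul_one]
      _ = star v * v * x * (star v * w) := by simp only [h x hx, mul_assoc]
      _ = x * (star v * w) := by rw [Unitary.star_mul_self_of_mem hv, one_mul]
  · rw [← mul_assoc, Unitary.mul_star_self_of_mem hv, one_mul]

end NormalizerSubgroup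

section Inclusion

variable {B : StarSubalgebra ℂ A}

lemma isRegular_iff_cstarSpan_eq_top {R : Type*} [NormedRing R] [StarRing R] [CStarRing R]
    [NormedAlgebra ℂ R] [StarModule ℂ R] {B : Set R} :
    IsRegular B ↔ cstarSpan (normalizerSubgroup B).subtype ⊤ = ⊤ := by
  rw [IsRegular, ← image_coe_normalizerSubgroup]
  rfl

lemma le_cstarSpan_of_unitariesIn_le {S : StarSubalgebra ℂ A} (hS : IsClosed (S : Set A))
    {N : Subgroup (unitary A)} (hN : unitariesIn S ≤ N) {H : Subgroup N}
    (hH : (unitariesIn S).subgroupOf N ≤ H) : S ≤ cstarSpan N.subtype H := by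
  have hspan : Submodule.span ℂ {v : A | v ∈ S ∧ v ∈ unitary A}
      ≤ (cstarSpan N.subtype H).toSubalgebra.toSubmodule := by
    refine Submodule.span_le.2 fun v hv ↦ ?_
    have hvN : (⟨v, hv.2⟩ : unitary A) ∈ N := hN hv.1
    exact coe_mem_cstarSpan (π := N.subtype) (h := ⟨_, hvN⟩) (hH hv.1)
  exact (le_span_unitary hS).trans hspan

lemma genC_eq_cstarSpan (hBclosed : IsClosed (B : Set A)) :
    genC (B : Set A) = cstarSpan (normalizerSubgroup (B : Set A)).subtype (innerSubgroup B) := by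
  have hcent : IsClosed (StarSubalgebra.centralizer ℂ (B : Set A) : Set A) := by
    rw [StarSubalgebra.coe_centralizer]
    exact Set.isClosed_centralizer _
  refine le_antisymm (StarSubalgebra.topologicalClosure_minimal
    (StarAlgebra.adjoin_le (Set.union_subset ?_ ?_))
    (StarSubalgebra.isClosed_topologicalClosure _))
    (StarSubalgebra.topologicalClosure_mono (StarAlgebra.adjoin_le ?_))
  · exact le_cstarSpan_of_unitariesIn_le hBclosed (unitariesIn_le_normalizerSubgroup B) le_sup_left
  · rw [← coe_centralizer_eq_cent]
    exact le_cstarSpan_of_unitariesIn_le hcent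
      (unitariesIn_centralizer_le_normalizerSubgroup B) le_sup_right
  · rintro _ ⟨n, hn, rfl⟩
    obtain ⟨b, c, hb, -, hc, -, hbc⟩ := mem_innerSubgroup.1 hn
    refine (congrArg (· ∈ _) hbc).mpr (mul_mem ?_ ?_)
    · exact StarAlgebra.subset_adjoin ℂ _ (Or.inl hb)
    · exact StarAlgebra.subset_adjoin ℂ _ (Or.inr hc)

/-- By simplicity the elements `y*y` and `yy*` of the centre of `B`, where `y = wx`, are scalars,
so `y` is a multiple of a unitary of `B`. -/
lemma mem_UBC_of_mul_mem (hBclosed : IsClosed (B : Set A)) (hB : IsSimpleCStar (B : Set A))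
    {w x : A} (hw : w ∈ normalizer (B : Set A)) (hx : x ∈ cent (B : Set A)) (hx0 : x ≠ 0)
    (hwx : w * x ∈ B) : w ∈ UBC (B : Set A) := by
  have hww : star w * w = 1 := Unitary.star_mul_self_of_mem hw.1
  rw [← mem_centralizer] at hx
  have hxw : star (w * x) * w = star x := by rw [star_mul, mul_assoc, hww, mul_one]
  have hleft : star (w * x) * (w * x) ∈ cent (B : Set A) := by
    rw [← mul_assoc, hxw]
    exact mem_centralizer.1 (mul_mem (star_mem hx) hx)
  have hright : w * x * star (w * x) ∈ cent (B : Set A) := by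
    rw [show w * x * star (w * x) = w * (x * star x) * star w by simp only [star_mul, mul_assoc]]
    exact conj_mem_cent_of_mem_normalizer hw (mem_centralizer.1 (mul_mem hx (star_mem hx)))
  obtain ⟨k, hk⟩ := exists_algebraMap_eq_of_central hBclosed hB (mul_mem (star_mem hwx) hwx) hleft
  obtain ⟨l, hl⟩ := exists_algebraMap_eq_of_central hBclosed hB (mul_mem hwx (star_mem hwx)) hright
  have hy0 : w * x ≠ 0 := fun h ↦ hx0 (by rw [← one_mul x, ← hww, mul_assoc, h, mul_zero])
  have hv := inv_norm_smul_mem_unitary hy0 hk hl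
  set v : A := ((‖w * x‖⁻¹ : ℝ) : ℂ) • (w * x)
  have hvw : star v * w = ((‖w * x‖⁻¹ : ℝ) : ℂ) • star x := by
    rw [star_smul, smul_mul_assoc, hxw, Complex.star_def, Complex.conj_ofReal]
  refine ⟨v, star v * w, SMulMemClass.smul_mem _ hwx, hv, ?_,
    mul_mem (Unitary.star_mem hv) hw.1, ?_⟩
  · rw [hvw]
    exact mem_centralizer.1 (SMulMemClass.smul_mem _ (star_mem hx))
  · rw [← mul_assoc, Unitary.mul_star_self_of_mem hv, one_mul]

/-- By bimodularity, `w* E(w)` centralizes `B`. -/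
lemma IsCondExp.eq_zero_of_notMem_UBC (hBclosed : IsClosed (B : Set A))
    (hB : IsSimpleCStar (B : Set A)) {E : A →ₗ[ℂ] A} (hE : IsCondExp (B : Set A) E) {w : A}
    (hw : w ∈ normalizer (B : Set A)) (hwB : w ∉ UBC (B : Set A)) : E w = 0 := by
  obtain ⟨hrange, -, -, hbimod⟩ := hE
  have hsw : star w * w = 1 := Unitary.star_mul_self_of_mem hw.1
  have hws : w * star w = 1 := Unitary.mul_star_self_of_mem hw.1
  have hintertwine : ∀ b ∈ B, E w * b = w * b * star w * E w := by
    intro b hb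
    calc E w * b = E (w * b) := by simpa using (hbimod 1 (one_mem B) b hb w).symm
      _ = E (w * b * star w * w) := by rw [mul_assoc (w * b), hsw, mul_one]
      _ = w * b * star w * E w := by
          simpa using hbimod _ (conj_mem_of_mem_normalizer hw hb) 1 (one_mem B) w
  have hcent : star w * E w ∈ cent (B : Set A) := by
    intro b hb
    rw [mul_assoc, hintertwine b hb]
    simp only [← mul_assoc, hsw, one_mul]
  by_contra hne
  refine hwB (mem_UBC_of_mul_mem hBclosed hB hw hcent (fun h ↦ hne ?_) ?_)
  · rw [← one_mul (E w), ← hws, mul_assoc, h, mul_zero]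
  · rw [← mul_assoc, hws, one_mul]
    exact hrange w

end Inclusion

section WeylGroup

lemma exists_lift_map_one {Γ G : Type*} [Group Γ] [Group G] {H : Subgroup Γ} [H.Normal]
    (e : G →* Γ ⧸ H) : ∃ u : G → Γ, u 1 = 1 ∧ ∀ g, (u g : Γ ⧸ H) = e g := by
  classical
  refine ⟨Function.update (fun g ↦ (e g).out) 1 1, by simp, fun g ↦ ?_⟩
  rcases eq_or_ne g 1 with rfl | hg
  · simp
  · simp [hg]

/-- The Weyl group of `B ⊆ R`: unitaries normalizing `B`, modulo `U(B)·U(C_R(B))`. -/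
abbrev WeylGroup {R : Type*} [NormedRing R] [StarRing R] [Algebra ℂ R] [StarModule ℂ R]
    (B : StarSubalgebra ℂ R) : Type _ :=
  normalizerSubgroup (B : Set R) ⧸ innerSubgroup B

variable {B : StarSubalgebra ℂ A} {E : A →ₗ[ℂ] A} {n : ℕ} {l : Fin n → A}

lemma image_conj_genC (hBclosed : IsClosed (B : Set A)) (w : normalizerSubgroup (B : Set A)) :
    (fun x ↦ ((w : unitary A) : A) * x * star ((w : unitary A) : A)) '' (genC (B : Set A) : Set A)
      = genC (B : Set A) := by
  rw [genC_eq_cstarSpan hBclosed]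
  exact image_conj_cstarSpan (π := (normalizerSubgroup (B : Set A)).subtype) w

lemma IsCondExp.mem_cstarSpan (hBclosed : IsClosed (B : Set A)) (hE : IsCondExp (B : Set A) E)
    (x : A) : E x ∈ cstarSpan (normalizerSubgroup (B : Set A)).subtype (innerSubgroup B) :=
  le_cstarSpan_of_unitariesIn_le hBclosed (unitariesIn_le_normalizerSubgroup B) le_sup_left (hE.1 x)

lemma IsCondExp.eq_zero_of_notMem_innerSubgroup (hBclosed : IsClosed (B : Set A))
    (hB : IsSimpleCStar (B : Set A)) (hE : IsCondExp (B : Set A) E)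
    (w : normalizerSubgroup (B : Set A)) (hw : w ∉ innerSubgroup B) : E (w : unitary A) = 0 :=
  hE.eq_zero_of_notMem_UBC hBclosed hB (mem_normalizerSubgroup.1 w.2) (mt mem_innerSubgroup.2 hw)

lemma finite_weylGroup (hBclosed : IsClosed (B : Set A)) (hB : IsSimpleCStar (B : Set A))
    (hE : IsCondExp (B : Set A) E) (hl : IsRightQB E l) (hreg : IsRegular (B : Set A)) :
    Finite (WeylGroup B) := by
  rcases subsingleton_or_nontrivial A with hA | hA
  · infer_instance
  let F : A →L[ℂ] A := ⟨E, hE.continuous⟩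
  have hF1 : F 1 ≠ 0 := (hE.2.1 1 (one_mem B)).trans_ne one_ne_zero
  exact finite_of_quasiBasis (E := F) (u := Quotient.out) (hE.mem_cstarSpan hBclosed) hl
    (hE.eq_zero_of_notMem_innerSubgroup hBclosed hB) hF1 (isRegular_iff_cstarSpan_eq_top.1 hreg)
    ((funext Quotient.out_eq : _ = id) ▸ Function.bijective_id)

lemma existsUnique_genC_coeff {G : Type*} [Fintype G] {u : G → normalizerSubgroup (B : Set A)}
    (hBclosed : IsClosed (B : Set A)) (hB : IsSimpleCStar (B : Set A))
    (hE : IsCondExp (B : Set A) E) (hl : IsRightQB E l) (hreg : IsRegular (B : Set A))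
    (hu : Function.Bijective fun g ↦ (u g : WeylGroup B)) (x : A) :
    ∃! c : G → A, (∀ g, c g ∈ genC (B : Set A)) ∧ x = ∑ g, ((u g : unitary A) : A) * c g := by
  let F : A →L[ℂ] A := ⟨E, hE.continuous⟩
  rw [genC_eq_cstarSpan hBclosed]
  exact existsUnique_coeff (E := F) (hE.mem_cstarSpan hBclosed) hl
    (hE.eq_zero_of_notMem_innerSubgroup hBclosed hB) (isRegular_iff_cstarSpan_eq_top.1 hreg) hu x

lemma isRegular_of_forall_eq_sum {G : Type*} [Fintype G] {u : G → A}
    (hBclosed : IsClosed (B : Set A)) (hu : ∀ g, u g ∈ normalizer (B : Set A))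
    (hsum : ∀ x, ∃ c : G → A, (∀ g, c g ∈ genC (B : Set A)) ∧ x = ∑ g, u g * c g) :
    IsRegular (B : Set A) := by
  rw [isRegular_iff_cstarSpan_eq_top, StarSubalgebra.eq_top_iff]
  intro x
  obtain ⟨c, hc, rfl⟩ := hsum x
  refine sum_mem fun g _ ↦ mul_mem ?_ ?_
  · exact coe_mem_cstarSpan (π := (normalizerSubgroup (B : Set A)).subtype)
      (h := ⟨⟨u g, (hu g).1⟩, mem_normalizerSubgroup.2 (hu g)⟩) trivial
  · rw [genC_eq_cstarSpan hBclosed] at hc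
    exact cstarSpan_mono le_top (hc g)

end WeylGroup

theorem regular_iff_twisted_crossed_product_general
    (B : StarSubalgebra ℂ A) (hBclosed : IsClosed (B : Set A))
    (hBsimple : IsSimpleCStar (B : Set A))
    (E : A →ₗ[ℂ] A) (hE : IsCondExp (B : Set A) E)
    (nE : ℕ) (lE : Fin nE → A) (hlE : IsRightQB E lE) :
    IsRegular (B : Set A) ↔
      ∃ (D : FiniteGroupData) (u : D.G → A),
        u 1 = 1 ∧
        (∀ g, u g ∈ unitary A) ∧
        (∀ g, (fun x => u g * x * star (u g)) '' (B : Set A) = (B : Set A)) ∧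
        (∀ g, (fun x => u g * x * star (u g)) '' (genC (B : Set A) : Set A)
          = (genC (B : Set A) : Set A)) ∧
        (∀ g h, u g * u h * star (u (g * h)) ∈ UBC (B : Set A)) ∧
        (∀ g : D.G, g ≠ 1 →
          ¬ ∃ v, v ∈ (B : Set A) ∧ v ∈ unitary A ∧
            ∀ x ∈ (B : Set A), u g * x * star (u g) = v * x * star v) ∧
        (∀ x : A, ∃ c : D.G → A,
          (∀ g, c g ∈ (genC (B : Set A) : Set A)) ∧ x = ∑ g, u g * c g ∧
          ∀ c' : D.G → A, (∀ g, c' g ∈ (genC (B : Set A) : Set A)) →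
            x = ∑ g, u g * c' g → c' = c) := by
  refine ⟨fun hreg ↦ ?_, fun ⟨D, u, _, hu, huB, _, _, _, hsum⟩ ↦ isRegular_of_forall_eq_sum hBclosed
    (fun g ↦ ⟨hu g, huB g⟩) fun x ↦ (hsum x).imp fun _ hc ↦ ⟨hc.1, hc.2.1⟩⟩
  have := finite_weylGroup hBclosed hBsimple hE hlE hreg
  let e : Shrink.{0} (WeylGroup B) ≃* WeylGroup B := Shrink.mulEquiv
  have := Fintype.ofFinite (Shrink.{0} (WeylGroup B))
  obtain ⟨u, hu_one, hu⟩ := exists_lift_map_one e.toMonoidHom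
  have hu_bij : Function.Bijective fun g ↦ (u g : WeylGroup B) := by
    rw [funext hu]
    exact e.bijective
  have hu_mem (g) : ((u g : unitary A) : A) ∈ normalizer (B : Set A) :=
    mem_normalizerSubgroup.1 (u g).2
  refine ⟨⟨Shrink.{0} (WeylGroup B)⟩, fun g ↦ (u g : unitary A), by simp [hu_one],
    fun g ↦ (hu_mem g).1, fun g ↦ (hu_mem g).2, fun g ↦ image_conj_genC hBclosed (u g),
    fun g h ↦ ?_, fun g hg ⟨v, hvB, hv, hconj⟩ ↦ hg (e.injective ?_), fun x ↦ ?_⟩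
  · exact (mem_innerSubgroup (n := u g * u h * (u (g * h))⁻¹)).1
      ((QuotientGroup.eq_one_iff _).1 (by simp [hu]))
  · rw [map_one]
    exact (hu g).symm.trans ((QuotientGroup.eq_one_iff _).2
      (mem_innerSubgroup.2 (mem_UBC_of_conj_eq (hu_mem g).1 hvB hv hconj)))
  · obtain ⟨c, ⟨hc, hx⟩, huniq⟩ := existsUnique_genC_coeff hBclosed hBsimple hE hlE hreg hu_bij x
    exact ⟨c, hc, hx, fun c' hc' hx' ↦ huniq c' ⟨hc', hx'⟩⟩

/-- an inclusion `B ⊆ A` of simple unital C*-algebras with a finite-index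
conditional expectation is regular iff there are a finite group `G` and unitaries
`u : G → U(A)` with `u_e = 1` such that each `u_g` normalizes `B` and
`C := C*(B ∪ C_A(B))`, the cocycle `σ(g,h) = u_g u_h u_{gh}*` lies in
`U(B)·U(C_A(B)) ⊆ U(C)`, `Ad(u_g)|_B` is outer for `g ≠ e`, and every `x ∈ A` is
uniquely `Σ_g u_g c_g` with `c_g ∈ C`; i.e. `(α, σ)` with `α_g = Ad(u_g)|_C` is a
cocycle action of `G` on `C` leaving `B` outerly invariant and
`(B ⊂ A) ≅ (B ⊂ C ⋊^r_{(α,σ)} G)`. -/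
theorem regular_iff_twisted_crossed_product
    (B : StarSubalgebra ℂ A) (hBclosed : IsClosed (B : Set A))
    (hAsimple : IsSimpleCStar (Set.univ : Set A))
    (hBsimple : IsSimpleCStar (B : Set A))
    (E : A →ₗ[ℂ] A) (hE : IsCondExp (B : Set A) E)
    (nE : ℕ) (lE : Fin nE → A) (hlE : IsRightQB E lE) :
    IsRegular (B : Set A) ↔
      ∃ (D : FiniteGroupData) (u : D.G → A),
        u 1 = 1 ∧
        (∀ g, u g ∈ unitary A) ∧
        (∀ g, (fun x => u g * x * star (u g)) '' (B : Set A) = (B : Set A)) ∧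
        (∀ g, (fun x => u g * x * star (u g)) '' (genC (B : Set A) : Set A)
          = (genC (B : Set A) : Set A)) ∧
        (∀ g h, u g * u h * star (u (g * h)) ∈ UBC (B : Set A)) ∧
        (∀ g : D.G, g ≠ 1 →
          ¬ ∃ v, v ∈ (B : Set A) ∧ v ∈ unitary A ∧
            ∀ x ∈ (B : Set A), u g * x * star (u g) = v * x * star v) ∧
        (∀ x : A, ∃ c : D.G → A,
          (∀ g, c g ∈ (genC (B : Set A) : Set A)) ∧ x = ∑ g, u g * c g ∧
          ∀ c' : D.G → A, (∀ g, c' g ∈ (genC (B : Set A) : Set A)) →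
            x = ∑ g, u g * c' g → c' = c) :=
  regular_iff_twisted_crossed_product_general B hBclosed hBsimple E hE nE lE hlE

end RegularInclusion
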